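/- For every dimension n there is a constant C(n) such that for every Riemannian metric g on the n-dimensional torus T^n, the systole satisfies Sys(T^n, g) ≤ C(n) · Vol(T^n, g)^{1/n}. -/

import Mathlib

/-!
Formalization of a statement from L. Guth, "Systolic inequalities and minimal hypersurfaces"
(arXiv:0903.5299).

Since Mathlib does not have Riemannian metrics, a Riemannian metric `g` on a closed manifold
is encoded by its geodesic distance function: a (length/intrinsic) metric space structure.
Lengths of curves are computed from the distance as the total variation, which for the geodesic
distance of a Riemannian metric agrees with the Riemannian length.  The `d`-dimensional
Riemannian volume is encoded as the `d`-dimensional Hausdorff measure (with the normalization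
constant `ω_d/2^d` making it agree with the Riemannian volume on `d`-dimensional Riemannian
submanifolds).
-/

open MeasureTheory Metric Set
open scoped ENNReal

noncomputable section

/-- The length (total variation, i.e. arclength) of a path in an (extended) metric space.
For a path in a Riemannian manifold, computing it with respect to the geodesic distance
gives the Riemannian length of the path. -/
def pathLength {X : Type} [PseudoEMetricSpace X] {x y : X} (γ : Path x y) : ℝ≥0∞ :=
  eVariationOn (fun t => γ t) Set.univ

/-- A metric is a length (intrinsic) metric: the distance between two points is the infimum
of the lengths of paths joining them.  The geodesic distance of a Riemannian metric is a
length metric. -/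
def IsLengthMetric (X : Type) [PseudoEMetricSpace X] : Prop :=
  ∀ x y : X, edist x y = ⨅ γ : Path x y, pathLength γ

/-- The systole of a space: the infimum of the lengths of all non-contractible closed curves. -/
def systole (X : Type) [PseudoEMetricSpace X] : ℝ≥0∞ :=
  ⨅ (x : X) (γ : Path x x) (_ : ¬γ.Homotopic (Path.refl x)), pathLength γ

/-- The volume `ω_d = π^(d/2)/Γ(d/2+1)` of the Euclidean unit ball in dimension `d`. -/
def unitBallVolume (d : ℕ) : ℝ≥0∞ :=
  ENNReal.ofReal (Real.pi ^ ((d : ℝ) / 2) / Real.Gamma ((d : ℝ) / 2 + 1))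

/-- The `d`-dimensional Riemannian volume of a subset of a metric space: the `d`-dimensional
Hausdorff measure, normalized (à la Federer, by `ω_d/2^d`) so that it agrees with the
Riemannian volume on `d`-dimensional Riemannian manifolds and their `d`-dimensional
submanifolds. -/
def rvol (d : ℕ) {X : Type} [EMetricSpace X] [MeasurableSpace X] [BorelSpace X]
    (s : Set X) : ℝ≥0∞ :=
  (unitBallVolume d / 2 ^ d) * μH[(d : ℝ)] s

/-- The standard topological `n`-torus `(ℝ/ℤ)ⁿ`. -/
abbrev Torus (n : ℕ) : Type := Fin n → AddCircle (1 : ℝ)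


open Filter Topology in
/-- Eilenberg's inequality for the distance function. -/
lemma eilenberg_aux {M : Type} [MetricSpace M] [MeasurableSpace M] [BorelSpace M]
    (x : M) (A : Set M) (k : ℕ) :
    ∫⁻ r : ℝ, μH[(k : ℝ)] (A ∩ sphere x r) ≤ μH[((k + 1 : ℕ) : ℝ)] A := by
  by_cases htop : μH[((k + 1 : ℕ) : ℝ)] A = ∞
  · rw [htop]; exact le_top
  set H := μH[((k + 1 : ℕ) : ℝ)] A with hH
  set f : M → ℝ := fun y => dist y x with hf
  have hcov : ∀ j : ℕ, ∃ t : ℕ → Set M, A ⊆ ⋃ i, t i ∧ (∀ i, ediam (t i) ≤ ((j : ℝ≥0∞) + 1)⁻¹) ∧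
      ∑' i, ⨆ _ : (t i).Nonempty, ediam (t i) ^ ((k + 1 : ℕ) : ℝ) ≤ H + ((j : ℝ≥0∞) + 1)⁻¹ := by
    intro j
    have hpos : (0 : ℝ≥0∞) < ((j : ℝ≥0∞) + 1)⁻¹ := by
      rw [ENNReal.inv_pos]; exact ENNReal.add_ne_top.2 ⟨ENNReal.natCast_ne_top j, ENNReal.one_ne_top⟩
    have h1 : (⨅ (t : ℕ → Set M) (_ : A ⊆ ⋃ n, t n) (_ : ∀ n, ediam (t n) ≤ ((j : ℝ≥0∞) + 1)⁻¹),
          ∑' n, ⨆ _ : (t n).Nonempty, ediam (t n) ^ ((k + 1 : ℕ) : ℝ)) ≤ H := by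
      rw [hH, Measure.hausdorffMeasure_apply]
      exact le_iSup₂_of_le (((j : ℝ≥0∞) + 1)⁻¹) hpos le_rfl
    have h2 := lt_of_le_of_lt h1 (ENNReal.lt_add_right htop hpos.ne')
    simp only [iInf_lt_iff] at h2
    obtain ⟨t, h3, h4, h5⟩ := h2
    exact ⟨t, h3, h4, h5.le⟩
  choose t ht1 ht2 ht3 using hcov
  set G : ℕ → ℝ → ℝ≥0∞ := fun j r => ∑' i,
    (toMeasurable volume (f '' (t j i))).indicator (fun _ => ediam (t j i) ^ (k : ℝ)) r with hG
  have hr0 : Tendsto (fun j : ℕ => ((j : ℝ≥0∞) + 1)⁻¹) atTop (𝓝 0) := by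
    have := (tendsto_add_atTop_iff_nat (f := fun n : ℕ => (n : ℝ≥0∞)⁻¹) 1).2
      ENNReal.tendsto_inv_nat_nhds_zero
    simpa using this
  have hmeas : ∀ j, Measurable (G j) := by
    intro j
    refine Measurable.tsum (fun i => ?_)
    exact measurable_const.indicator (measurableSet_toMeasurable _ _)
  have hint : ∀ j, ∫⁻ r, G j r ≤ H + ((j : ℝ≥0∞) + 1)⁻¹ := by
    intro j
    rw [hG, lintegral_tsum (fun i => (measurable_const.indicator
      (measurableSet_toMeasurable _ _)).aemeasurable)]
    refine le_trans (ENNReal.tsum_le_tsum fun i => ?_) (ht3 j)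
    rw [lintegral_indicator_const (measurableSet_toMeasurable _ _), measure_toMeasurable]
    rcases (t j i).eq_empty_or_nonempty with he | hne
    · simp [he]
    · refine le_trans ?_ (le_iSup (fun _ : (t j i).Nonempty =>
        ediam (t j i) ^ ((k + 1 : ℕ) : ℝ)) hne)
      have hv : volume (f '' (t j i)) ≤ ediam (t j i) := by
        refine (Real.volume_le_diam _).trans ?_
        have hl : LipschitzWith 1 f := LipschitzWith.dist_left x
        simpa using hl.ediam_image_le (t j i)
      calc ediam (t j i) ^ (k : ℝ) * volume (f '' (t j i))
          ≤ ediam (t j i) ^ (k : ℝ) * ediam (t j i) := by gcongr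
        _ = ediam (t j i) ^ ((k + 1 : ℕ) : ℝ) := by
            rw [ENNReal.rpow_natCast, ENNReal.rpow_natCast, pow_succ]
  have hpt : ∀ r, μH[(k : ℝ)] (A ∩ sphere x r) ≤ liminf (fun j => G j r) atTop := by
    intro r
    have := Measure.hausdorffMeasure_le_liminf_tsum (l := atTop)
      (ι := fun j : ℕ => {i : ℕ // (t j i ∩ sphere x r).Nonempty}) (k : ℝ) (A ∩ sphere x r)
      (fun j : ℕ => ((j : ℝ≥0∞) + 1)⁻¹) hr0 (fun j i => t j i.1 ∩ sphere x r)
      (Eventually.of_forall fun j i => (ediam_mono inter_subset_left).trans (ht2 j i))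
      (Eventually.of_forall fun j y hy => by
        obtain ⟨i, hi⟩ := mem_iUnion.1 (ht1 j hy.1)
        exact mem_iUnion.2 ⟨⟨i, ⟨y, hi, hy.2⟩⟩, hi, hy.2⟩)
    refine this.trans (liminf_le_liminf (Eventually.of_forall fun j => ?_))
    rw [hG]
    refine le_trans ?_ (ENNReal.tsum_comp_le_tsum_of_injective
      (f := (Subtype.val : {i : ℕ // (t j i ∩ sphere x r).Nonempty} → ℕ))
      Subtype.val_injective _)
    refine ENNReal.tsum_le_tsum fun i => ?_
    obtain ⟨y, hy, hyr⟩ := i.2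
    rw [indicator_of_mem]
    · exact ENNReal.rpow_le_rpow (ediam_mono inter_subset_left) (Nat.cast_nonneg k)
    · exact subset_toMeasurable _ _ ⟨y, hy, hyr⟩
  calc ∫⁻ r : ℝ, μH[(k : ℝ)] (A ∩ sphere x r) ≤ ∫⁻ r : ℝ, liminf (fun j => G j r) atTop :=
        lintegral_mono hpt
    _ ≤ liminf (fun j => ∫⁻ r, G j r) atTop := lintegral_liminf_le hmeas
    _ ≤ liminf (fun j : ℕ => H + ((j : ℝ≥0∞) + 1)⁻¹) atTop :=
        liminf_le_liminf (Eventually.of_forall hint)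
    _ = H := by
        have : Tendsto (fun j : ℕ => H + ((j : ℝ≥0∞) + 1)⁻¹) atTop (𝓝 (H + 0)) :=
          tendsto_const_nhds.add hr0
        rw [add_zero] at this
        exact this.liminf_eq

lemma exists_good_radius {M : Type} [MetricSpace M] [MeasurableSpace M] [BorelSpace M]
    (x : M) (A : Set M) (k : ℕ) {R : ℝ} (a : ℝ≥0∞)
    (h : μH[((k + 1 : ℕ) : ℝ)] (A ∩ ball x R) < a * ENNReal.ofReal (R / 2)) :
    ∃ r ∈ Ioo (R / 2) R, μH[(k : ℝ)] (A ∩ sphere x r) < a := by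
  by_contra hcon
  push Not at hcon
  refine absurd h (not_lt.2 ?_)
  calc a * ENNReal.ofReal (R / 2) = ∫⁻ r : ℝ, (Ioo (R / 2) R).indicator (fun _ => a) r := by
        rw [lintegral_indicator_const measurableSet_Ioo, Real.volume_Ioo]
        congr 2; ring
    _ ≤ ∫⁻ r : ℝ, μH[(k : ℝ)] ((A ∩ ball x R) ∩ sphere x r) := by
        refine lintegral_mono fun r => ?_
        by_cases hr : r ∈ Ioo (R / 2) R
        · rw [indicator_of_mem hr]
          refine (hcon r hr).trans (measure_mono ?_)
          intro y hy
          refine ⟨⟨hy.1, ?_⟩, hy.2⟩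
          have h1 : dist y x = r := hy.2
          rw [mem_ball, h1]; exact hr.2
        · rw [indicator_of_notMem hr]; exact zero_le
    _ ≤ _ := eilenberg_aux x _ k

/-- `Z` cuts `X` into relatively open pieces of radius at most `R`. -/
def SepCut {M : Type} [MetricSpace M] (X Z : Set M) (R : ℝ) : Prop :=
  IsClosed Z ∧ Z ⊆ X ∧ ∃ c : M → M, (∀ y ∈ X, dist y (c y) ≤ R) ∧
    ∀ y ∈ X \ Z, ∃ e > 0, ∀ y' ∈ X, dist y' y < e → c y' = c y

lemma SepCut.replace {M : Type} [MetricSpace M] {X Z : Set M} {R : ℝ} (h : SepCut X Z R)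
    (hX : IsClosed X) (x : M) {r : ℝ} (hr : r ≤ R) :
    SepCut X ((Z \ ball x r) ∪ (X ∩ sphere x r)) R := by
  obtain ⟨hZ, hZX, c, hc1, hc2⟩ := h
  classical
  refine ⟨(hZ.sdiff isOpen_ball).union (hX.inter isClosed_sphere),
    union_subset (sdiff_subset.trans hZX) inter_subset_left,
    fun y => if dist y x < r then x else c y, ?_, ?_⟩
  · intro y hy
    by_cases h : dist y x < r
    · simp only [h, if_true]; linarith
    · simp only [h, if_false]; exact hc1 y hy
  · rintro y ⟨hyX, hyn⟩
    have hne : dist y x ≠ r := fun hs => hyn (Or.inr ⟨hyX, hs⟩)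
    rcases lt_or_gt_of_ne hne with hlt | hgt
    · refine ⟨r - dist y x, by linarith, fun y' _ hy' => ?_⟩
      have := dist_triangle y' y x
      have h1 : dist y' x < r := by linarith
      simp [h1, hlt]
    · have hyZ : y ∉ Z := fun hz => hyn (Or.inl ⟨hz, by simp [hgt.le]⟩)
      obtain ⟨e, he, hce⟩ := hc2 y ⟨hyX, hyZ⟩
      refine ⟨min e (dist y x - r), lt_min he (by linarith), fun y' hy'X hy' => ?_⟩
      have := dist_triangle y y' x
      rw [dist_comm y y'] at this
      have h2 := lt_of_lt_of_le hy' (min_le_right _ _)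
      have h1 : ¬ dist y' x < r := by linarith
      simp only [h1, hgt.not_gt, if_false]
      exact hce y' hy'X (lt_of_lt_of_le hy' (min_le_left _ _))

lemma SepCut.exists_finite {M : Type} [MetricSpace M] [MeasurableSpace M] [BorelSpace M]
    [CompactSpace M] {X : Set M} (hX : IsClosed X) {R : ℝ} (hR : 0 < R) (k : ℕ)
    (hfin : μH[((k + 1 : ℕ) : ℝ)] X < ∞) :
    ∃ Z, SepCut X Z R ∧ μH[(k : ℝ)] Z < ∞ := by
  have hrad : ∀ x : M, ∃ r ∈ Ioo (R / 2) R, μH[(k : ℝ)] (X ∩ sphere x r) < ∞ := by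
    intro x
    refine exists_good_radius x X k ∞ ?_
    rw [ENNReal.top_mul (by simpa using hR)]
    exact (measure_mono inter_subset_left).trans_lt hfin
  choose r hr1 hr2 using hrad
  have key : ∀ s : Finset M, ∃ Z, SepCut X Z R ∧
      Z ∩ (⋃ x ∈ s, ball x (r x)) ⊆ ⋃ x ∈ s, X ∩ sphere x (r x) := by
    classical
    intro s
    induction s using Finset.induction_on with
    | empty =>
      refine ⟨X, ⟨hX, subset_rfl, id, ?_, ?_⟩, by simp⟩
      · intro y _; simpa using hR.le
      · rintro y ⟨h1, h2⟩; exact absurd h1 h2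
    | insert a s _ ih =>
      obtain ⟨Z, hZ, hs⟩ := ih
      refine ⟨_, hZ.replace hX a (hr1 a).2.le, ?_⟩
      rintro z ⟨hz | hz, hb⟩
      · rw [Finset.set_biUnion_insert] at hb ⊢
        rcases hb with hb | hb
        · exact absurd hb hz.2
        · exact Or.inr (hs ⟨hz.1, hb⟩)
      · rw [Finset.set_biUnion_insert]
        exact Or.inl hz
  obtain ⟨s, hs⟩ := isCompact_univ.elim_finite_subcover (fun x : M => ball x (r x))
    (fun x => isOpen_ball) (fun x _ => mem_iUnion.2 ⟨x, mem_ball_self (by linarith [(hr1 x).1])⟩)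
  obtain ⟨Z, hZ, hZs⟩ := key s
  refine ⟨Z, hZ, ?_⟩
  have hsub : Z ⊆ ⋃ x ∈ s, X ∩ sphere x (r x) := fun z hz => hZs ⟨hz, hs (mem_univ z)⟩
  refine (measure_mono hsub).trans_lt ?_
  exact measure_biUnion_lt_top s.finite_toSet (fun x _ => hr2 x)

lemma SepCut.step {M : Type} [MetricSpace M] [MeasurableSpace M] [BorelSpace M]
    [CompactSpace M] {X : Set M} (hX : IsClosed X) {R : ℝ} (hR : 0 < R) (k : ℕ)
    (hfin : μH[((k + 1 : ℕ) : ℝ)] X < ∞) (a : ℝ≥0∞) (ha : a ≠ 0)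
    (h : ∀ x, μH[((k + 1 : ℕ) : ℝ)] (X ∩ ball x R) < a * ENNReal.ofReal (R / 2)) :
    ∃ Z, SepCut X Z R ∧ μH[(k : ℝ)] Z < ∞ ∧
      ∀ x, μH[(k : ℝ)] (Z ∩ ball x (R / 2)) < 2 * a := by
  obtain ⟨Z0, hZ0, hZ0f⟩ := SepCut.exists_finite hX hR k hfin
  set I := ⨅ (Z : Set M) (_ : SepCut X Z R), μH[(k : ℝ)] Z with hI
  have hIle : ∀ Z, SepCut X Z R → I ≤ μH[(k : ℝ)] Z := fun Z hZ => iInf₂_le Z hZ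
  have hItop : I ≠ ∞ := ((hIle Z0 hZ0).trans_lt hZ0f).ne
  have h1 : I < I + a := ENNReal.lt_add_right hItop ha
  obtain ⟨Z, hZ, hZlt⟩ : ∃ Z, ∃ _ : SepCut X Z R, μH[(k : ℝ)] Z < I + a := by
    conv_lhs at h1 => rw [hI]
    simpa only [iInf_lt_iff] using h1
  have hZfin : μH[(k : ℝ)] Z < ∞ := lt_of_lt_of_le hZlt le_top
  refine ⟨Z, hZ, hZfin, fun x => ?_⟩
  obtain ⟨r, hr, hS⟩ := exists_good_radius x X k a (h x)
  refine (measure_mono (inter_subset_inter_right Z (ball_subset_ball hr.1.le))).trans_lt ?_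
  have hrep := hIle _ (hZ.replace hX x hr.2.le)
  have h2 := hrep.trans (measure_union_le _ _)
  have hsplit : μH[(k : ℝ)] (Z ∩ ball x r) + μH[(k : ℝ)] (Z \ ball x r) = μH[(k : ℝ)] Z :=
    measure_inter_add_sdiff Z measurableSet_ball
  have hdfin : μH[(k : ℝ)] (Z \ ball x r) ≠ ∞ :=
    ((measure_mono sdiff_subset).trans_lt hZfin).ne
  have h3 : μH[(k : ℝ)] (Z \ ball x r) + μH[(k : ℝ)] (Z ∩ ball x r) <
      μH[(k : ℝ)] (Z \ ball x r) + (μH[(k : ℝ)] (X ∩ sphere x r) + a) := by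
    rw [add_comm, hsplit, ← add_assoc]
    exact hZlt.trans_le (by gcongr)
  have h4 := lt_of_add_lt_add_left h3
  refine h4.trans_le ?_
  rw [two_mul]
  gcongr

/-- Small Hausdorff measure yields colourings by few colours with small pieces. -/
lemma exists_colouring (k : ℕ) : ∃ K : ℝ, 0 < K ∧
    ∀ (M : Type) [MetricSpace M] [MeasurableSpace M] [BorelSpace M] [CompactSpace M]
      (X : Set M) (R : ℝ), IsClosed X → 0 < R → μH[(k : ℝ)] X < ∞ →
      (∀ x, μH[(k : ℝ)] (X ∩ ball x R) < ENNReal.ofReal (R ^ k / K)) →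
      ∃ δ > 0, ∃ c : Fin k → M → M, (∀ i x, dist x (c i x) ≤ 2 * R) ∧
        ∀ x ∈ X, ∃ i, ∀ x' ∈ ball x δ, c i x' = c i x := by
  induction k with
  | zero =>
    refine ⟨1, one_pos, fun M _ _ _ _ X R hX hR _ h => ⟨1, one_pos, fun i => i.elim0,
      fun i => i.elim0, fun x hx => ?_⟩⟩
    exfalso
    have h1 := h x
    have h2 : (1 : ℝ≥0∞) ≤ μH[0] (X ∩ ball x R) :=
      Measure.one_le_hausdorffMeasure_zero_of_nonempty ⟨x, hx, mem_ball_self hR⟩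
    simp at h1
    exact absurd h1 (not_lt.2 h2)
  | succ k ih =>
    obtain ⟨K, hK, ih⟩ := ih
    refine ⟨2 ^ (k + 2) * K, by positivity, fun M _ _ _ _ X R hX hR hfin h => ?_⟩
    obtain ⟨Z, hZ, hZfin, hZb⟩ := SepCut.step hX hR k hfin
      (ENNReal.ofReal ((R / 2) ^ k / (2 * K))) (by
        rw [Ne, ENNReal.ofReal_eq_zero, not_le]; positivity) (fun x => by
        refine (h x).trans_eq ?_
        rw [← ENNReal.ofReal_mul (by positivity)]
        congr 1
        rw [div_pow]
        field_simp
        ring)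
    obtain ⟨hZc, hZX, c, hc1, hc2⟩ := hZ
    obtain ⟨δ, hδ, c', hc'1, hc'2⟩ := ih M Z (R / 2) hZc (by positivity) hZfin (fun x => by
        refine (hZb x).trans_eq ?_
        rw [← ENNReal.ofReal_ofNat, ← ENNReal.ofReal_mul (by positivity)]
        congr 1
        field_simp)
    -- the part of `X` away from `Z`
    set Y : Set M := X \ thickening (δ / 2) Z with hY
    have hYcl : IsClosed Y := hX.sdiff isOpen_thickening
    have hYc : IsCompact Y := hYcl.isCompact
    have hYZ : ∀ y ∈ Y, y ∈ X \ Z := fun y hy =>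
      ⟨hy.1, fun hz => hy.2 (self_subset_thickening (by positivity) Z hz)⟩
    obtain ⟨η, hη, hηc⟩ : ∃ η > 0, ∀ y ∈ Y, ∀ y' ∈ Y, dist y' y < η → c y' = c y := by
      choose! e he hce using hc2
      obtain ⟨η, hη, hηs⟩ := lebesgue_number_lemma_of_metric (c := fun y : Y => ball (y : M) (e y))
        hYc (fun _ => isOpen_ball)
        (fun y hy => mem_iUnion.2 ⟨⟨y, hy⟩, mem_ball_self (he y (hYZ y hy))⟩)
      refine ⟨η, hη, fun y hy y' hy' hd => ?_⟩
      obtain ⟨z, hz⟩ := hηs y hy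
      have h1 := hce z (hYZ z z.2) y hy.1 (hz (mem_ball_self hη))
      have h2 := hce z (hYZ z z.2) y' hy'.1 (hz hd)
      rw [h1, h2]
    set η' := min (η / 2) R with hη'
    have hη'0 : 0 < η' := lt_min (by positivity) hR
    classical
    let d : M → M := fun x => if hx : ∃ y ∈ Y, dist x y < η' then c hx.choose else x
    have hd1 : ∀ x, dist x (d x) ≤ 2 * R := by
      intro x
      by_cases hx : ∃ y ∈ Y, dist x y < η'
      · have hs := hx.choose_spec
        have : d x = c hx.choose := dif_pos hx
        rw [this]
        have h1 := hc1 hx.choose hs.1.1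
        have h2 := dist_triangle x hx.choose (c hx.choose)
        have h3 : η' ≤ R := min_le_right _ _
        linarith [hs.2]
      · have : d x = x := dif_neg hx
        rw [this, dist_self]; positivity
    have hd2 : ∀ y ∈ Y, ∀ x, dist x y < η' → d x = c y := by
      intro y hy x hxy
      have hx : ∃ y ∈ Y, dist x y < η' := ⟨y, hy, hxy⟩
      have hs := hx.choose_spec
      have : d x = c hx.choose := dif_pos hx
      rw [this]
      refine hηc y hy _ hs.1 ?_
      have h2 := dist_triangle_left hx.choose y x
      have h3 : η' ≤ η / 2 := min_le_left _ _
      linarith [hs.2]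
    refine ⟨min (δ / 2) η', lt_min (by positivity) hη'0, Fin.cons d c', ?_, ?_⟩
    · intro i x
      refine Fin.cases ?_ (fun j => ?_) i
      · simpa using hd1 x
      · have := hc'1 j x
        simp only [Fin.cons_succ]
        linarith
    · intro x hx
      by_cases hxt : x ∈ thickening (δ / 2) Z
      · obtain ⟨z, hz, hxz⟩ := mem_thickening_iff.1 hxt
        obtain ⟨i, hi⟩ := hc'2 z hz
        refine ⟨i.succ, fun x' hx' => ?_⟩
        simp only [Fin.cons_succ]
        have h1 : dist x' x < δ / 2 := lt_of_lt_of_le hx' (min_le_left _ _)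
        have h2 := dist_triangle x' x z
        rw [hi x' (by rw [mem_ball]; linarith), hi x (by rw [mem_ball]; linarith)]
      · refine ⟨0, fun x' hx' => ?_⟩
        simp only [Fin.cons_zero]
        rw [hd2 x ⟨hx, hxt⟩ x' (lt_of_lt_of_le hx' (min_le_right _ _)),
          hd2 x ⟨hx, hxt⟩ x (by simpa using hη'0)]

/-- The unit fundamental domain of `ℤⁿ`. -/
def unitDom (n : ℕ) : Set (Fin n → ℝ) := ZSpan.fundamentalDomain (Pi.basisFun ℝ (Fin n))

lemma mem_zspan_iff_int {n : ℕ} (v : Fin n → ℝ) :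
    v ∈ Submodule.span ℤ (range (Pi.basisFun ℝ (Fin n))) ↔ ∃ e : Fin n → ℤ, v = fun i => (e i : ℝ) := by
  rw [Module.Basis.mem_span_iff_repr_mem]
  constructor
  · intro h
    choose e he using h
    refine ⟨e, funext fun i => ?_⟩
    simpa using (he i).symm
  · rintro ⟨e, rfl⟩ i
    exact ⟨e i, by simp⟩

lemma perturb_volume {n : ℕ} (p : (Fin n → ℝ) → (Fin n → ℝ)) (hp : ContDiff ℝ 1 p)
    (hper : ∀ (x : Fin n → ℝ) (e : Fin n → ℤ), p (x + fun i => (e i : ℝ)) = p x) :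
    ∃ ε > 0, ∀ t : ℝ, 0 < t → t < ε →
      ∫ x in unitDom n, (ContinuousLinearMap.id ℝ (Fin n → ℝ) + t • fderiv ℝ p x).det = 1 := by
  have hdp : Continuous (fderiv ℝ p) := hp.continuous_fderiv one_ne_zero
  have hdiff : Differentiable ℝ p := hp.differentiable one_ne_zero
  have hDper : ∀ (x : Fin n → ℝ) (e : Fin n → ℤ), fderiv ℝ p (x + fun i => (e i : ℝ)) = fderiv ℝ p x := by
    intro x e
    have h1 : (fun y => p (y + fun i => (e i : ℝ))) = p := funext fun y => hper y e
    have h2 := fderiv_comp_add_right (𝕜 := ℝ) (f := p) (x := x) (fun i => (e i : ℝ))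
    rw [h1] at h2
    exact h2.symm
  obtain ⟨K, hK⟩ : ∃ K : ℝ, ∀ x, ‖fderiv ℝ p x‖ ≤ K := by
    obtain ⟨K, hK⟩ := (isCompact_Icc (a := (0 : Fin n → ℝ)) (b := 1)).exists_bound_of_continuousOn
      hdp.continuousOn
    refine ⟨K, fun x => ?_⟩
    have h1 := hDper (fun i => Int.fract (x i)) (fun i => ⌊x i⌋)
    have h2 : ((fun i => Int.fract (x i)) + fun i => ((⌊x i⌋ : ℤ) : ℝ)) = x := by
      funext i; simp [Int.fract_add_floor]
    rw [h2] at h1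
    rw [h1]
    exact hK _ ⟨fun i => Int.fract_nonneg _, fun i => (Int.fract_lt_one _).le⟩
  have hK0 : 0 ≤ K := (norm_nonneg _).trans (hK 0)
  have hLip : ∀ x y, ‖p x - p y‖ ≤ K * ‖x - y‖ := fun x y =>
    convex_univ.norm_image_sub_le_of_norm_fderiv_le (fun z _ => hdiff z) (fun z _ => hK z)
      (mem_univ y) (mem_univ x)
  obtain ⟨r, hr, hrdet⟩ : ∃ r > 0, ∀ A : (Fin n → ℝ) →L[ℝ] (Fin n → ℝ), ‖A‖ < r →
      0 < (ContinuousLinearMap.id ℝ (Fin n → ℝ) + A).det := by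
    have hc : ContinuousAt (fun A : (Fin n → ℝ) →L[ℝ] (Fin n → ℝ) =>
        (ContinuousLinearMap.id ℝ (Fin n → ℝ) + A).det) 0 :=
      (ContinuousLinearMap.continuous_det.comp (continuous_const.add continuous_id)).continuousAt
    have hpos : 0 < (ContinuousLinearMap.id ℝ (Fin n → ℝ) + 0).det := by simp [ContinuousLinearMap.det]
    have := hc.eventually (lt_mem_nhds hpos)
    obtain ⟨r, hr, hs⟩ := Metric.eventually_nhds_iff.1 this
    exact ⟨r, hr, fun A hA => hs (by simpa using hA)⟩
  refine ⟨min (1 / (K + 1)) (r / (K + 1)), by positivity, fun t ht htε => ?_⟩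
  have htK : t * K < 1 := by
    have h1 := lt_of_lt_of_le htε (min_le_left _ _)
    rw [lt_div_iff₀ (by positivity)] at h1
    linarith
  have htr : t * K < r := by
    have h1 := lt_of_lt_of_le htε (min_le_right _ _)
    rw [lt_div_iff₀ (by positivity)] at h1
    linarith
  set f : (Fin n → ℝ) → (Fin n → ℝ) := fun x => x + t • p x with hf
  have hfd : ∀ x, HasFDerivAt f (ContinuousLinearMap.id ℝ (Fin n → ℝ) + t • fderiv ℝ p x) x :=
    fun x => (hasFDerivAt_id x).add ((hdiff x).hasFDerivAt.const_smul t)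
  have hinj : Function.Injective f := by
    intro x y hxy
    have h1 : x - y = t • (p y - p x) := by
      have : x + t • p x = y + t • p y := hxy
      rw [smul_sub]
      rw [sub_eq_sub_iff_add_eq_add, this, add_comm]
    have h2 : ‖x - y‖ ≤ t * K * ‖x - y‖ := by
      conv_lhs => rw [h1, norm_smul, Real.norm_of_nonneg ht.le]
      rw [mul_assoc, norm_sub_rev x y]
      exact mul_le_mul_of_nonneg_left (hLip y x) ht.le
    have h3 : ‖x - y‖ = 0 := by
      have := norm_nonneg (x - y)
      nlinarith
    exact sub_eq_zero.1 (norm_eq_zero.1 h3)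
  have hsurj : Function.Surjective f := by
    intro y
    have hcon : ContractingWith (Real.toNNReal (t * K)) (fun x => y - t • p x) := by
      refine ⟨by rw [Real.toNNReal_lt_one]; exact htK, ?_⟩
      refine LipschitzWith.of_dist_le_mul fun a b => ?_
      rw [dist_eq_norm, dist_eq_norm, Real.coe_toNNReal _ (by positivity)]
      have : y - t • p a - (y - t • p b) = t • (p b - p a) := by rw [smul_sub]; abel
      rw [this, norm_smul, Real.norm_of_nonneg ht.le, mul_assoc, norm_sub_rev a b]
      exact mul_le_mul_of_nonneg_left (hLip b a) ht.le
    refine ⟨ContractingWith.fixedPoint _ hcon, ?_⟩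
    have h1 : y - t • p (ContractingWith.fixedPoint _ hcon) = ContractingWith.fixedPoint _ hcon :=
      hcon.fixedPoint_isFixedPt
    show ContractingWith.fixedPoint _ hcon + t • p (ContractingWith.fixedPoint _ hcon) = y
    conv_lhs => arg 1; rw [← h1]
    abel
  have hQm : MeasurableSet (unitDom n) := ZSpan.fundamentalDomain_measurableSet _
  have hfc : Continuous f := continuous_id.add (hp.continuous.const_smul t)
  have hfund : IsAddFundamentalDomain (Submodule.span ℤ (range (Pi.basisFun ℝ (Fin n)))).toAddSubgroup
      (f '' unitDom n) volume := by
    refine IsAddFundamentalDomain.mk'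
      (hQm.image_of_continuousOn_injOn hfc.continuousOn hinj.injOn).nullMeasurableSet ?_
    intro y
    obtain ⟨x, rfl⟩ := hsurj y
    have hcomm : ∀ g : (Submodule.span ℤ (range (Pi.basisFun ℝ (Fin n)))).toAddSubgroup,
        g +ᵥ f x = f (g +ᵥ x) := by
      intro g
      obtain ⟨e, he⟩ := (mem_zspan_iff_int _).1 g.2
      have h1 : (g +ᵥ x : Fin n → ℝ) = x + fun i => (e i : ℝ) := by
        rw [AddSubgroup.vadd_def, he, vadd_eq_add, add_comm]
      have h2 : (g +ᵥ f x : Fin n → ℝ) = f x + fun i => (e i : ℝ) := by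
        rw [AddSubgroup.vadd_def, he, vadd_eq_add, add_comm]
      rw [h1, h2]
      simp only [hf]
      rw [hper]
      abel
    obtain ⟨g, hg, hgu⟩ := ZSpan.exist_unique_vadd_mem_fundamentalDomain (Pi.basisFun ℝ (Fin n)) x
    refine ⟨g, ?_, ?_⟩
    · show g +ᵥ f x ∈ f '' unitDom n
      erw [hcomm g]
      exact ⟨_, hg, rfl⟩
    · intro g' hg'
      have hg'' : g' +ᵥ f x ∈ f '' unitDom n := hg'
      rw [hcomm g', hinj.mem_set_image] at hg''
      exact hgu g' hg''
  have hcount : Countable (Submodule.span ℤ (range (Pi.basisFun ℝ (Fin n)))).toAddSubgroup := by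
    have hsu : Function.Surjective (fun e : Fin n → ℤ =>
        (⟨fun i => (e i : ℝ), (mem_zspan_iff_int _).2 ⟨e, rfl⟩⟩ :
          (Submodule.span ℤ (range (Pi.basisFun ℝ (Fin n)))).toAddSubgroup)) := by
      rintro ⟨v, hv⟩
      obtain ⟨e, rfl⟩ := (mem_zspan_iff_int _).1 hv
      exact ⟨e, rfl⟩
    exact hsu.countable
  have hvol : volume (f '' unitDom n) = 1 := by
    have h1 := hfund.measure_eq (ZSpan.isAddFundamentalDomain' (Pi.basisFun ℝ (Fin n)) volume)
    rw [h1, ZSpan.volume_fundamentalDomain]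
    have : (Matrix.of ⇑(Pi.basisFun ℝ (Fin n))) = 1 := by
      ext i j
      simp [Matrix.one_apply, Pi.single_apply, eq_comm]
    rw [this]; simp
  have hchange := lintegral_abs_det_fderiv_eq_addHaar_image volume hQm
    (fun x _ => (hfd x).hasFDerivWithinAt) (hinj.injOn (s := unitDom n))
  rw [hvol] at hchange
  have hdetpos : ∀ x, 0 < (ContinuousLinearMap.id ℝ (Fin n → ℝ) + t • fderiv ℝ p x).det := by
    intro x
    refine hrdet _ ?_
    rw [norm_smul, Real.norm_of_nonneg ht.le]
    exact (mul_le_mul_of_nonneg_left (hK x) ht.le).trans_lt htr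
  have hdetc : Continuous fun x => (ContinuousLinearMap.id ℝ (Fin n → ℝ) + t • fderiv ℝ p x).det :=
    ContinuousLinearMap.continuous_det.comp (continuous_const.add (hdp.const_smul t))
  rw [integral_eq_lintegral_of_nonneg_ae (Filter.Eventually.of_forall fun x => (hdetpos x).le)
    hdetc.aestronglyMeasurable]
  have : ∀ x, |(ContinuousLinearMap.id ℝ (Fin n → ℝ) + t • fderiv ℝ p x).det| =
    (ContinuousLinearMap.id ℝ (Fin n → ℝ) + t • fderiv ℝ p x).det := fun x => abs_of_pos (hdetpos x)
  simp only [this] at hchange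
  rw [hchange]; simp

lemma perturb_volume_one {n : ℕ} (p : (Fin n → ℝ) → (Fin n → ℝ)) (hp : ContDiff ℝ 1 p)
    (hper : ∀ (x : Fin n → ℝ) (e : Fin n → ℤ), p (x + fun i => (e i : ℝ)) = p x) :
    ∫ x in unitDom n, (ContinuousLinearMap.id ℝ (Fin n → ℝ) + fderiv ℝ p x).det = 1 := by
  have hdp : Continuous (fderiv ℝ p) := hp.continuous_fderiv one_ne_zero
  set a : Fin n → Fin n → (Fin n → ℝ) → ℝ := fun i j x => fderiv ℝ p x (Pi.single j 1) i with ha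
  have hac : ∀ i j, Continuous (a i j) := by
    intro i j
    exact (continuous_apply i).comp (hdp.clm_apply continuous_const)
  have hdet : ∀ (t : ℝ) x, (ContinuousLinearMap.id ℝ (Fin n → ℝ) + t • fderiv ℝ p x).det =
      ∑ σ : Equiv.Perm (Fin n), ∑ S ∈ (Finset.univ : Finset (Fin n)).powerset,
        (((Equiv.Perm.sign σ : ℤ) : ℝ) * ((∏ i ∈ S, (1 : Matrix (Fin n) (Fin n) ℝ) (σ i) i) *
          ∏ i ∈ Finset.univ \ S, a (σ i) i x)) * t ^ (Finset.univ \ S).card := by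
    intro t x
    rw [ContinuousLinearMap.det, ← LinearMap.det_toMatrix', Matrix.det_apply']
    refine Finset.sum_congr rfl fun σ _ => ?_
    have h1 : ∀ i, LinearMap.toMatrix' (↑(ContinuousLinearMap.id ℝ (Fin n → ℝ) + t • fderiv ℝ p x) :
        (Fin n → ℝ) →ₗ[ℝ] (Fin n → ℝ)) (σ i) i =
        (1 : Matrix (Fin n) (Fin n) ℝ) (σ i) i + t * a (σ i) i x := by
      intro i
      rw [LinearMap.toMatrix'_apply]
      have h2 : (fun j' => if j' = i then (1 : ℝ) else 0) = Pi.single i 1 := by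
        ext j'; simp [Pi.single_apply]
      simp [ha, Matrix.one_apply, Pi.single_apply]
    simp only [h1]
    rw [Finset.prod_add, Finset.mul_sum]
    refine Finset.sum_congr rfl fun S _ => ?_
    rw [Finset.prod_mul_distrib, Finset.prod_const]
    ring
  have hint : ∀ (σ : Equiv.Perm (Fin n)) (S : Finset (Fin n)), Integrable (fun x =>
      (((Equiv.Perm.sign σ : ℤ) : ℝ) * ((∏ i ∈ S, (1 : Matrix (Fin n) (Fin n) ℝ) (σ i) i) *
          ∏ i ∈ Finset.univ \ S, a (σ i) i x))) (volume.restrict (unitDom n)) := by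
    intro σ S
    have hc : Continuous (fun x : Fin n → ℝ =>
      (((Equiv.Perm.sign σ : ℤ) : ℝ) * ((∏ i ∈ S, (1 : Matrix (Fin n) (Fin n) ℝ) (σ i) i) *
          ∏ i ∈ Finset.univ \ S, a (σ i) i x))) :=
      continuous_const.mul (continuous_const.mul (continuous_finsetProd _ fun i _ => hac _ _))
    have h1 : IntegrableOn (fun x : Fin n → ℝ =>
      (((Equiv.Perm.sign σ : ℤ) : ℝ) * ((∏ i ∈ S, (1 : Matrix (Fin n) (Fin n) ℝ) (σ i) i) *
          ∏ i ∈ Finset.univ \ S, a (σ i) i x))) (Icc 0 1) volume :=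
      hc.continuousOn.integrableOn_compact isCompact_Icc
    refine h1.mono_set ?_
    intro x hx
    rw [unitDom, ZSpan.mem_fundamentalDomain] at hx
    exact ⟨fun i => by simpa using (hx i).1, fun i => by simpa using (hx i).2.le⟩
  set P : Polynomial ℝ := ∑ σ : Equiv.Perm (Fin n),
      ∑ S ∈ (Finset.univ : Finset (Fin n)).powerset,
      Polynomial.C (∫ x in unitDom n, (((Equiv.Perm.sign σ : ℤ) : ℝ) *
        ((∏ i ∈ S, (1 : Matrix (Fin n) (Fin n) ℝ) (σ i) i) *
          ∏ i ∈ Finset.univ \ S, a (σ i) i x))) * Polynomial.X ^ (Finset.univ \ S).card with hP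
  have hPe : ∀ t : ℝ, ∫ x in unitDom n,
      (ContinuousLinearMap.id ℝ (Fin n → ℝ) + t • fderiv ℝ p x).det = P.eval t := by
    intro t
    simp only [hdet]
    rw [integral_finsetSum _ (fun σ _ => integrable_finsetSum _ fun S _ => (hint σ S).mul_const _)]
    rw [hP, Polynomial.eval_finsetSum]
    refine Finset.sum_congr rfl fun σ _ => ?_
    rw [integral_finsetSum _ (fun S _ => (hint σ S).mul_const _), Polynomial.eval_finsetSum]
    refine Finset.sum_congr rfl fun S _ => ?_
    rw [integral_mul_const]
    simp
  obtain ⟨ε, hε, hsmall⟩ := perturb_volume p hp hper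
  have hP1 : P = 1 := by
    refine Polynomial.eq_of_infinite_eval_eq _ _ ((Ioo_infinite hε).mono ?_)
    intro t ht
    show P.eval t = Polynomial.eval t 1
    rw [← hPe, hsmall t ht.1 ht.2]; simp
  have := hPe 1
  rw [hP1] at this
  simpa using this

open Convolution in
lemma no_equivariant_colouring_meas {n : ℕ} (g : (Fin n → ℝ) → (Fin n → ℝ))
    (hloc : ∀ k, LocallyIntegrable (fun x => g x k) volume)
    (heq : ∀ (x : Fin n → ℝ) (e : Fin n → ℤ), g (x + fun i => (e i : ℝ)) = g x + fun i => (e i : ℝ))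
    (δ : ℝ) (hδ : 0 < δ)
    (hcol : ∀ x, ∃ k, ∀ x' ∈ ball x δ, g x' k = g x k) : False := by
  let φ : ContDiffBump (0 : Fin n → ℝ) := ⟨δ / 4, δ / 2, by positivity, by linarith⟩
  set F : (Fin n → ℝ) → (Fin n → ℝ) := fun x k =>
    (φ.normed volume ⋆[ContinuousLinearMap.lsmul ℝ ℝ, volume] (fun y => g y k)) x with hF
  have hFs : ContDiff ℝ 1 F := by
    rw [contDiff_pi]
    intro k
    exact φ.hasCompactSupport_normed.contDiff_convolution_left (n := 1) _ φ.contDiff_normed (hloc k)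
  have hFe : ∀ (x : Fin n → ℝ) (e : Fin n → ℤ), F (x + fun i => (e i : ℝ)) = F x + fun i => (e i : ℝ) := by
    intro x e
    funext k
    simp only [hF, Pi.add_apply]
    rw [convolution_def, convolution_def]
    have hex : ConvolutionExistsAt (φ.normed volume) (fun y => g y k) x
        (ContinuousLinearMap.lsmul ℝ ℝ) volume :=
      φ.hasCompactSupport_normed.convolutionExists_left _ φ.continuous_normed (hloc k) x
    have h1 : ∀ t : Fin n → ℝ, (ContinuousLinearMap.lsmul ℝ ℝ) (φ.normed volume t)
        (g (x + (fun i => (e i : ℝ)) - t) k) =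
        (ContinuousLinearMap.lsmul ℝ ℝ) (φ.normed volume t) (g (x - t) k) +
          φ.normed volume t * (e k : ℝ) := by
      intro t
      rw [add_sub_right_comm, heq]
      simp [mul_add]
    simp only [h1]
    rw [integral_add hex (φ.integrable_normed.mul_const _), integral_mul_const, φ.integral_normed,
      one_mul]
  set p : (Fin n → ℝ) → (Fin n → ℝ) := fun x => F x - x with hp
  have hpd : ContDiff ℝ 1 p := hFs.sub contDiff_id
  have hper : ∀ (x : Fin n → ℝ) (e : Fin n → ℤ), p (x + fun i => (e i : ℝ)) = p x := by
    intro x e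
    simp only [hp]
    rw [hFe]; abel
  have hone := perturb_volume_one p hpd hper
  have hzero : ∀ x, (ContinuousLinearMap.id ℝ (Fin n → ℝ) + fderiv ℝ p x).det = 0 := by
    intro x
    have hFd : DifferentiableAt ℝ F x := hFs.differentiable one_ne_zero x
    have h1 : ContinuousLinearMap.id ℝ (Fin n → ℝ) + fderiv ℝ p x = fderiv ℝ F x := by
      have : fderiv ℝ p x = fderiv ℝ F x - ContinuousLinearMap.id ℝ (Fin n → ℝ) :=
        (hFd.hasFDerivAt.sub (hasFDerivAt_id x)).fderiv
      rw [this]; abel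
    rw [h1]
    obtain ⟨k, hk⟩ := hcol x
    have hconst : (fun y => F y k) =ᶠ[nhds x] fun _ => g x k := by
      filter_upwards [ball_mem_nhds x (show 0 < δ / 2 by positivity)] with y hy
      have hyx : dist y x < δ / 2 := hy
      have h2 := φ.normed_convolution_eq_right (μ := volume) (g := fun z => g z k) (x₀ := y) (by
        intro z hz
        have hz' : dist z y < δ / 2 := hz
        have := dist_triangle z y x
        rw [hk z (by rw [mem_ball]; linarith), hk y (by rw [mem_ball]; linarith)])
      show F y k = g x k
      rw [← hk y (by rw [mem_ball]; linarith)]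
      exact h2
    have hrow : ∀ v, fderiv ℝ F x v k = 0 := by
      intro v
      have h3 : HasFDerivAt (fun y => F y k)
          ((ContinuousLinearMap.proj k : (Fin n → ℝ) →L[ℝ] ℝ).comp (fderiv ℝ F x)) x :=
        (hasFDerivAt_pi'.1 hFd.hasFDerivAt) k
      have h4 : HasFDerivAt (fun y => F y k) (0 : (Fin n → ℝ) →L[ℝ] ℝ) x :=
        (hasFDerivAt_const (g x k) x).congr_of_eventuallyEq hconst
      have h5 := h3.unique h4
      have h6 := congrArg (fun L : (Fin n → ℝ) →L[ℝ] ℝ => L v) h5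
      simpa using h6
    rw [ContinuousLinearMap.det, ← LinearMap.det_toMatrix']
    refine Matrix.det_eq_zero_of_row_eq_zero k fun j => ?_
    rw [LinearMap.toMatrix'_apply]
    exact hrow _
  simp [hzero] at hone

lemma no_equivariant_colouring {n : ℕ} (g : (Fin n → ℝ) → (Fin n → ℝ))
    (heq : ∀ (x : Fin n → ℝ) (e : Fin n → ℤ), g (x + fun i => (e i : ℝ)) = g x + fun i => (e i : ℝ))
    (δ : ℝ) (hδ : 0 < δ)
    (hcol : ∀ x, ∃ k, ∀ x' ∈ ball x δ, g x' k = g x k) : False := by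
  obtain ⟨N, hN⟩ := exists_nat_gt (2 / δ)
  have hN0 : (0 : ℝ) < N := lt_trans (by positivity) hN
  have hNδ : 1 / (N : ℝ) < δ / 2 := by
    rw [div_lt_iff₀ hδ] at hN
    rw [div_lt_iff₀ hN0]; linarith
  let fl : (Fin n → ℝ) → (Fin n → ℤ) := fun x i => ⌊(N : ℝ) * x i⌋
  let Φ : (Fin n → ℤ) → (Fin n → ℝ) := fun z => g (fun i => (z i : ℝ) / N)
  have hround : ∀ x, dist (fun i => ((fl x i : ℤ) : ℝ) / N) x < δ / 2 := by
    intro x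
    refine lt_of_le_of_lt ((dist_pi_le_iff (by positivity)).2 fun i => ?_) hNδ
    rw [Real.dist_eq, abs_sub_comm, abs_le]
    have h1 := Int.floor_le ((N : ℝ) * x i)
    have h2 := Int.lt_floor_add_one ((N : ℝ) * x i)
    have h3 : x i - (⌊(N : ℝ) * x i⌋ : ℝ) / N = ((N : ℝ) * x i - ⌊(N : ℝ) * x i⌋) / N := by
      field_simp
    show -(1 / (N : ℝ)) ≤ x i - (⌊(N : ℝ) * x i⌋ : ℝ) / N ∧ x i - (⌊(N : ℝ) * x i⌋ : ℝ) / N ≤ 1 / N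
    rw [h3, neg_div', div_le_div_iff_of_pos_right hN0, div_le_div_iff_of_pos_right hN0]
    constructor <;> linarith
  have hflm : Measurable fl := by
    refine measurable_pi_lambda _ fun i => ?_
    exact Int.measurable_floor.comp (measurable_const.mul (measurable_pi_apply i))
  refine no_equivariant_colouring_meas (fun x => Φ (fl x)) ?_ ?_ (δ / 2) (by positivity) ?_
  · intro k
    have hm : Measurable fun x => Φ (fl x) k :=
      (Measurable.of_discrete (f := fun z => Φ z k)).comp hflm
    rw [locallyIntegrable_iff]
    intro C hC
    obtain ⟨B, hB⟩ : ∃ B : ℝ, ∀ x ∈ C, ‖Φ (fl x) k‖ ≤ B := by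
      obtain ⟨b, hb⟩ := hC.isBounded.bddAbove
      obtain ⟨a, ha⟩ := hC.isBounded.bddBelow
      have hfin : (Icc (fl a) (fl b)).Finite := finite_Icc _ _
      obtain ⟨B, hB⟩ := (hfin.image fun z => ‖Φ z k‖).bddAbove
      refine ⟨B, fun x hx => hB ⟨fl x, ⟨fun i => ?_, fun i => ?_⟩, rfl⟩⟩
      · exact Int.floor_le_floor (mul_le_mul_of_nonneg_left (ha hx i) hN0.le)
      · exact Int.floor_le_floor (mul_le_mul_of_nonneg_left (hb hx i) hN0.le)
    refine Measure.integrableOn_of_bounded (M := B) hC.measure_lt_top.ne hm.aestronglyMeasurable ?_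
    exact (ae_restrict_iff' hC.measurableSet).2 (Filter.Eventually.of_forall hB)
  · intro x e
    have h1 : (fun i => ((fl (x + fun i => (e i : ℝ)) i : ℤ) : ℝ) / N) =
        (fun i => ((fl x i : ℤ) : ℝ) / N) + fun i => (e i : ℝ) := by
      funext i
      have h2 : fl (x + fun i => (e i : ℝ)) i = fl x i + N * e i := by
        simp only [fl, Pi.add_apply, mul_add]
        have : (N : ℝ) * (e i : ℝ) = (((N : ℤ) * e i : ℤ) : ℝ) := by push_cast; ring
        rw [this, Int.floor_add_intCast]
      rw [h2, Pi.add_apply]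
      push_cast
      field_simp
    show g _ = g _ + _
    rw [h1, heq]
  · intro x
    obtain ⟨k, hk⟩ := hcol x
    refine ⟨k, fun x' hx' => ?_⟩
    have h1 : dist x' x < δ / 2 := hx'
    show g _ k = g _ k
    rw [hk _ (by
      rw [mem_ball]
      have := dist_triangle (fun i => ((fl x' i : ℤ) : ℝ) / N) x' x
      linarith [hround x']), hk (fun i => ((fl x i : ℤ) : ℝ) / N) (by
      rw [mem_ball]; linarith [hround x])]

/-- `y` is reached from `x` by a path whose projection has length `< L`. -/
def Near {E M : Type} [TopologicalSpace E] [PseudoEMetricSpace M] (q : E → M) (L : ℝ≥0∞)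
    (x y : E) : Prop :=
  ∃ γ : Path x y, eVariationOn (fun t => q (γ t)) Set.univ < L

lemma Near.symm {E M : Type} [TopologicalSpace E] [PseudoEMetricSpace M] {q : E → M} {L : ℝ≥0∞}
    {x y : E} (h : Near q L x y) : Near q L y x := by
  obtain ⟨γ, hγ⟩ := h
  refine ⟨γ.symm, lt_of_le_of_lt ?_ hγ⟩
  exact eVariationOn.comp_le_of_antitoneOn (fun t => q (γ t)) unitInterval.symm
    (fun a _ b _ hab => by
      rw [← Subtype.coe_le_coe, unitInterval.coe_symm_eq, unitInterval.coe_symm_eq]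
      have : (a : ℝ) ≤ b := hab
      linarith) (mapsTo_univ _ _)

lemma Near.trans {E M : Type} [TopologicalSpace E] [PseudoEMetricSpace M] {q : E → M}
    {L L' : ℝ≥0∞} {x y z : E} (h : Near q L x y) (h' : Near q L' y z) :
    Near q (L + L') x z := by
  obtain ⟨γ, hγ⟩ := h
  obtain ⟨γ', hγ'⟩ := h'
  refine ⟨γ.trans γ', lt_of_le_of_lt ?_ (ENNReal.add_lt_add hγ hγ')⟩
  let c : unitInterval := ⟨1/2, by norm_num, by norm_num⟩
  have hu : (Set.univ : Set unitInterval) = Iic c ∪ Ici c := by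
    ext t; simp
  have hsplit := eVariationOn.union (fun t => q ((γ.trans γ') t)) (s := Iic c) (t := Ici c) (x := c)
    isGreatest_Iic isLeast_Ici
  rw [← hu] at hsplit
  rw [hsplit]
  refine add_le_add ?_ ?_
  · have h1 : Set.EqOn (fun t => q ((γ.trans γ') t))
        ((fun t => q (γ t)) ∘ fun t : unitInterval => Set.projIcc (0:ℝ) 1 zero_le_one (2 * t))
        (Iic c) := by
      intro t ht
      have ht' : (t : ℝ) ≤ 1/2 := ht
      have := t.2.1
      simp only [Function.comp, Path.trans_apply]
      rw [dif_pos ht', Set.projIcc_of_mem zero_le_one (x := 2 * (t:ℝ)) ⟨by linarith, by linarith⟩]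
    rw [eVariationOn.eq_of_eqOn h1]
    refine eVariationOn.comp_le_of_monotoneOn _ _ (fun a _ b _ hab => ?_) (mapsTo_univ _ _)
    exact Set.monotone_projIcc _ (by have : (a : ℝ) ≤ b := hab; linarith)
  · have h1 : Set.EqOn (fun t => q ((γ.trans γ') t))
        ((fun t => q (γ' t)) ∘ fun t : unitInterval => Set.projIcc (0:ℝ) 1 zero_le_one (2 * t - 1))
        (Ici c) := by
      intro t ht
      have ht' : 1/2 ≤ (t : ℝ) := ht
      have := t.2.2
      simp only [Function.comp, Path.trans_apply]
      split_ifs with h2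
      · have h3 : (t : ℝ) = 1/2 := le_antisymm h2 ht'
        have h4 : Set.projIcc (0:ℝ) 1 zero_le_one (2 * (t:ℝ) - 1) = 0 := by
          rw [h3]; norm_num
        rw [h4, γ'.source]
        have h5 : (⟨2 * (t:ℝ), (unitInterval.mul_pos_mem_iff zero_lt_two).2 ⟨t.2.1, h2⟩⟩ : unitInterval) = 1 := by
          ext; simp [h3]
        rw [h5, γ.target]
      · rw [Set.projIcc_of_mem zero_le_one (x := 2 * (t:ℝ) - 1) ⟨by linarith, by linarith⟩]
    rw [eVariationOn.eq_of_eqOn h1]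
    refine eVariationOn.comp_le_of_monotoneOn _ _ (fun a _ b _ hab => ?_) (mapsTo_univ _ _)
    exact Set.monotone_projIcc _ (by have : (a : ℝ) ≤ b := hab; linarith)

lemma Near.mono {E M : Type} [TopologicalSpace E] [PseudoEMetricSpace M] {q : E → M}
    {L L' : ℝ≥0∞} {x y : E} (h : Near q L x y) (hL : L ≤ L') : Near q L' x y :=
  let ⟨γ, hγ⟩ := h; ⟨γ, hγ.trans_le hL⟩

/-- the covering `ℝⁿ → M` induced by a homeomorphism with the torus -/
def tcov {n : ℕ} {M : Type} [TopologicalSpace M] (h : M ≃ₜ Torus n) (x : Fin n → ℝ) : M :=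
  h.symm (fun i => ((x i : ℝ) : AddCircle (1:ℝ)))

lemma tcov_continuous {n : ℕ} {M : Type} [TopologicalSpace M] (h : M ≃ₜ Torus n) :
    Continuous (tcov h) := by
  refine h.symm.continuous.comp (continuous_pi fun i => ?_)
  exact (AddCircle.continuous_mk' (1:ℝ)).comp (continuous_apply i)

lemma tcov_eq_iff {n : ℕ} {M : Type} [TopologicalSpace M] (h : M ≃ₜ Torus n) (x y : Fin n → ℝ) :
    tcov h x = tcov h y ↔ ∃ e : Fin n → ℤ, y = x + fun i => (e i : ℝ) := by
  unfold tcov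
  rw [h.symm.injective.eq_iff]
  constructor
  · intro hxy
    have h1 : ∀ i, ∃ m : ℤ, y i = x i + m := by
      intro i
      have h2 : ((y i - x i : ℝ) : AddCircle (1:ℝ)) = 0 := by
        rw [AddCircle.coe_sub, sub_eq_zero]; exact (congrFun hxy i).symm
      obtain ⟨m, hm⟩ := (AddCircle.coe_eq_zero_iff (1:ℝ)).1 h2
      refine ⟨m, ?_⟩
      have h3 : (m : ℝ) = y i - x i := by simpa using hm
      linarith
    choose e he using h1
    exact ⟨e, funext he⟩
  · rintro ⟨e, rfl⟩
    funext i
    simp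

lemma Near.translate {n : ℕ} {M : Type} [PseudoEMetricSpace M] (h : M ≃ₜ Torus n) {L : ℝ≥0∞}
    {x y : Fin n → ℝ} (hN : Near (tcov h) L x y) (e : Fin n → ℤ) :
    Near (tcov h) L (x + fun i => (e i : ℝ)) (y + fun i => (e i : ℝ)) := by
  obtain ⟨γ, hγ⟩ := hN
  refine ⟨γ.map (f := fun z => z + fun i => (e i : ℝ)) (by fun_prop), ?_⟩
  have : ∀ t, tcov h (γ.map (f := fun z => z + fun i => (e i : ℝ)) (by fun_prop) t) =
    tcov h (γ t) := fun t => ((tcov_eq_iff h _ _).2 ⟨e, rfl⟩).symm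
  simpa only [this] using hγ

lemma exists_lift {n : ℕ} {M : Type} [PseudoEMetricSpace M] (h : M ≃ₜ Torus n)
    (hM : IsLengthMetric M) {L : ℝ≥0∞} (x : Fin n → ℝ) (p : M) (hL : edist (tcov h x) p < L) :
    ∃ y, tcov h y = p ∧ Near (tcov h) L x y := by
  rw [hM, iInf_lt_iff] at hL
  obtain ⟨γ, hγ⟩ := hL
  have h1 : ∀ i, ∃ Γ : C(unitInterval, ℝ), (∀ t, (Γ t : AddCircle (1:ℝ)) = h (γ t) i) ∧ Γ 0 = x i := by
    intro i
    obtain ⟨Γ, h1, h2⟩ := (AddCircle.isCoveringMap_coe (1:ℝ)).exists_path_lifts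
      ⟨fun t => h (γ t) i, (continuous_apply i).comp (h.continuous.comp γ.continuous)⟩ (x i) (by
        show h (γ 0) i = _
        rw [γ.source]
        simp [tcov])
    exact ⟨Γ, fun t => congrFun h1 t, h2⟩
  choose Γ hΓ hΓ0 using h1
  have hq : ∀ t, tcov h (fun i => Γ i t) = γ t := by
    intro t
    unfold tcov
    rw [Homeomorph.symm_apply_eq]
    funext i
    exact hΓ i t
  refine ⟨fun i => Γ i 1, ?_, ⟨⟨⟨fun t i => Γ i t, by fun_prop⟩, funext hΓ0, rfl⟩, ?_⟩⟩
  · rw [hq, γ.target]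
  · convert hγ using 1
    unfold pathLength
    exact congrArg (fun f => eVariationOn f Set.univ) (funext hq)

lemma near_unique {n : ℕ} {M : Type} [PseudoEMetricSpace M] (h : M ≃ₜ Torus n) {L : ℝ≥0∞}
    {x y : Fin n → ℝ} (hN : Near (tcov h) L x y) (hL : L ≤ systole M) (hxy : tcov h x = tcov h y) :
    x = y := by
  obtain ⟨γ, hγ⟩ := hN
  let β : Path (tcov h x) (tcov h x) := (γ.map (tcov_continuous h)).cast rfl hxy
  have hβ : β.Homotopic (Path.refl _) := by
    by_contra hcon
    have h1 : systole M ≤ pathLength β := iInf_le_of_le _ (iInf_le_of_le β (iInf_le _ hcon))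
    have h2 : pathLength β < L := hγ
    exact absurd (h1.trans_lt (h2.trans_le hL)) (lt_irrefl _)
  funext k
  let f : C(M, AddCircle (1:ℝ)) := ⟨fun m => h m k, (continuous_apply k).comp h.continuous⟩
  have h3 := hβ.map f
  have cov := AddCircle.isCoveringMap_coe (1:ℝ)
  have hx : h (tcov h x) k = ((x k : ℝ) : AddCircle (1:ℝ)) := by simp [tcov]
  have hx0 : (β.map f.continuous).toContinuousMap 0 = ((x k : ℝ) : AddCircle (1:ℝ)) := by
    show (β.map f.continuous) 0 = _
    rw [Path.source]; exact hx
  have hx1 : ((Path.refl (tcov h x)).map f.continuous).toContinuousMap 0 =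
      ((x k : ℝ) : AddCircle (1:ℝ)) := hx
  have h4 := cov.liftPath_apply_one_eq_of_homotopicRel h3 (x k) hx0 hx1
  have h5 := (cov.eq_liftPath_iff' (Γ := ⟨fun t => γ t k, by fun_prop⟩) hx0).2
    ⟨by
      funext t
      show ((γ t k : ℝ) : AddCircle (1:ℝ)) = h (tcov h (γ t)) k
      simp [tcov], by simp⟩
  have h6 := (cov.eq_liftPath_iff' (Γ := ContinuousMap.const _ (x k)) hx1).2
    ⟨by
      funext t
      exact hx.symm, by simp⟩
  rw [← h5, ← h6] at h4
  simpa using h4.symm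

lemma Near.dist_lt {n : ℕ} {M : Type} [MetricSpace M] {h : M ≃ₜ Torus n} {η : ℝ}
    {x y : Fin n → ℝ} (hN : Near (tcov h) (ENNReal.ofReal η) x y) :
    dist (tcov h x) (tcov h y) < η := by
  obtain ⟨γ, hγ⟩ := hN
  have h1 := eVariationOn.edist_le (fun t => tcov h (γ t)) (mem_univ 0) (mem_univ 1)
  have h2 := h1.trans_lt hγ
  simp only [γ.source, γ.target] at h2
  rw [edist_dist] at h2
  exact (ENNReal.ofReal_lt_ofReal_iff_of_nonneg dist_nonneg).1 h2

lemma near_small {n : ℕ} {M : Type} [MetricSpace M] [CompactSpace M] (h : M ≃ₜ Torus n) :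
    ∃ η > 0, ∀ x y, Near (tcov h) (ENNReal.ofReal η) x y → ∀ k, |y k - x k| < 1 / 4 := by
  have huc := CompactSpace.uniformContinuous_of_continuous h.continuous
  obtain ⟨η, hη, H⟩ := Metric.uniformContinuous_iff.1 huc (1/4) (by norm_num)
  refine ⟨η, hη, fun x y ⟨γ, hγ⟩ k => ?_⟩
  let u : unitInterval → ℝ := fun t => |γ t k - x k|
  have hu : Continuous u := by fun_prop
  have hne : ∀ t, u t ≠ 1 / 4 := by
    intro t ht
    have h1 := (eVariationOn.edist_le (fun t => tcov h (γ t)) (mem_univ t) (mem_univ 0)).trans_lt hγ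
    simp only [γ.source] at h1
    rw [edist_dist] at h1
    have h2 := (ENNReal.ofReal_lt_ofReal_iff_of_nonneg dist_nonneg).1 h1
    have h3 := (dist_le_pi_dist _ _ k).trans_lt (H h2)
    simp only [tcov, Homeomorph.apply_symm_apply] at h3
    rw [dist_eq_norm, ← AddCircle.coe_sub,
      (AddCircle.norm_coe_eq_abs_iff (1:ℝ) one_ne_zero).2 (by
        have : |γ t k - x k| = 1/4 := ht
        rw [this]; norm_num)] at h3
    exact absurd h3 (by have : |γ t k - x k| = 1/4 := ht
                        rw [this]; exact lt_irrefl _)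
  by_contra hcon
  push Not at hcon
  have h0 : u 0 = 0 := by simp [u]
  have h1 : u 1 = |y k - x k| := by simp [u]
  have : (1/4 : ℝ) ∈ Set.range u :=
    mem_range_of_exists_le_of_exists_ge hu ⟨0, by rw [h0]; norm_num⟩ ⟨1, by rw [h1]; exact hcon⟩
  obtain ⟨t, ht⟩ := this
  exact hne t ht

lemma near_of_dist {n : ℕ} {M : Type} [MetricSpace M] [CompactSpace M] (h : M ≃ₜ Torus n)
    (hM : IsLengthMetric M) (η : ℝ) (hη : 0 < η) :
    ∃ δ > 0, ∀ x x', dist x x' < δ → Near (tcov h) (ENNReal.ofReal η) x x' := by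
  obtain ⟨η₀, hη₀, H⟩ := near_small h
  have huc := CompactSpace.uniformContinuous_of_continuous h.symm.continuous
  obtain ⟨δ, hδ, H'⟩ := Metric.uniformContinuous_iff.1 huc (min η η₀) (lt_min hη hη₀)
  refine ⟨min δ (1/4), by positivity, fun x x' hx => ?_⟩
  have h1 : dist (tcov h x) (tcov h x') < min η η₀ := by
    refine H' ?_
    refine (dist_pi_lt_iff hδ).2 fun i => ?_
    rw [dist_eq_norm, ← AddCircle.coe_sub]
    have h2 : ‖((x i - x' i : ℝ) : AddCircle (1:ℝ))‖ ≤ ‖x i - x' i‖ := QuotientAddGroup.norm_mk_le_norm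
    refine h2.trans_lt ?_
    rw [← dist_eq_norm]
    exact (dist_le_pi_dist x x' i).trans_lt (hx.trans_le (min_le_left _ _))
  obtain ⟨y, hy, hN⟩ := exists_lift h hM (L := ENNReal.ofReal (min η η₀)) x (tcov h x') (by
    rw [edist_dist]; exact (ENNReal.ofReal_lt_ofReal_iff_of_nonneg dist_nonneg).2 h1)
  have h3 := H x y (hN.mono (ENNReal.ofReal_le_ofReal (min_le_right _ _)))
  obtain ⟨e, he⟩ := (tcov_eq_iff h _ _).1 hy
  have : x' = y := by
    funext i
    have h4 := (dist_le_pi_dist x x' i).trans_lt (hx.trans_le (min_le_right _ _))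
    rw [Real.dist_eq] at h4
    have h5 := h3 i
    have h6 := congrFun he i
    simp only [Pi.add_apply] at h6
    rw [abs_lt] at h4 h5
    have h7 : (-1 : ℝ) < e i := by linarith
    have h8 : (e i : ℝ) < 1 := by linarith
    have h9 : e i = 0 := by
      have a : -1 < e i := by exact_mod_cast h7
      have b : e i < 1 := by exact_mod_cast h8
      omega
    rw [h6, h9]; simp
  rw [this]
  exact hN.mono (ENNReal.ofReal_le_ofReal (min_le_left _ _))

lemma systole_lt_of_colouring {n : ℕ} {M : Type} [MetricSpace M] [CompactSpace M]
    (h : M ≃ₜ Torus n) (hM : IsLengthMetric M) (D δ η : ℝ) (hD : 0 ≤ D) (hδ : 0 < δ) (hη : 0 < η)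
    (c : Fin n → M → M) (hc : ∀ i x, dist x (c i x) ≤ D)
    (hcol : ∀ x, ∃ i, ∀ x' ∈ ball x δ, c i x' = c i x) :
    systole M < ENNReal.ofReal (2 * (D + η) + η) := by
  by_contra hcon
  push Not at hcon
  have hex : ∀ k x, ∃ y, tcov h y = c k (tcov h x) ∧ Near (tcov h) (ENNReal.ofReal (D + η)) x y := by
    intro k x
    refine exists_lift h hM x _ ?_
    rw [edist_dist]
    exact (ENNReal.ofReal_lt_ofReal_iff_of_nonneg dist_nonneg).2 (by linarith [hc k (tcov h x)])
  choose G hG hGN using hex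
  have hper : ∀ x (e : Fin n → ℤ), tcov h (x + fun i => (e i : ℝ)) = tcov h x :=
    fun x e => ((tcov_eq_iff h _ _).2 ⟨e, rfl⟩).symm
  have hequiv : ∀ k x (e : Fin n → ℤ),
      G k (x + fun i => (e i : ℝ)) = G k x + fun i => (e i : ℝ) := by
    intro k x e
    refine near_unique h (((hGN k (x + fun i => (e i : ℝ))).symm.trans ((hGN k x).translate h e)).mono
      (L' := ENNReal.ofReal (2 * (D + η) + η)) ?_) hcon ?_
    · rw [← ENNReal.ofReal_add (by linarith) (by linarith)]
      exact ENNReal.ofReal_le_ofReal (by linarith)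
    · rw [hG, hper, hper, hG]
  obtain ⟨δ', hδ', H⟩ := near_of_dist h hM (min η δ) (lt_min hη hδ)
  refine no_equivariant_colouring (fun x k => G k x k) ?_ δ' hδ' ?_
  · intro x e
    funext k
    simp only [hequiv, Pi.add_apply]
  · intro x
    obtain ⟨k, hk⟩ := hcol (tcov h x)
    refine ⟨k, fun x' hx' => ?_⟩
    have hN := H x' x hx'
    have hck := hk (tcov h x') (by rw [mem_ball]; exact hN.dist_lt.trans_le (min_le_right _ _))
    have hN' := hN.mono (ENNReal.ofReal_le_ofReal (min_le_left η δ))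
    have : G k x' = G k x := by
      refine near_unique h ((((hGN k x').symm.trans hN').trans (hGN k x)).mono
        (L' := ENNReal.ofReal (2 * (D + η) + η)) ?_) hcon ?_
      · rw [← ENNReal.ofReal_add (by linarith) (by linarith),
          ← ENNReal.ofReal_add (by linarith) (by linarith)]
        exact ENNReal.ofReal_le_ofReal (by linarith)
      · rw [hG, hG, hck]
    simp only [this]

lemma systole_le_aux (n : ℕ) (hn : 0 < n) :
    ∃ K : ℝ, 0 < K ∧
      ∀ (M : Type) [MetricSpace M] [MeasurableSpace M] [BorelSpace M],
        Nonempty (M ≃ₜ Torus n) → IsLengthMetric M →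
        ∀ R : ℝ, 0 < R → μH[(n : ℝ)] (Set.univ : Set M) < ENNReal.ofReal (R ^ n / K) →
        systole M ≤ ENNReal.ofReal (7 * R) := by
  obtain ⟨K, hK, H⟩ := exists_colouring n
  refine ⟨K, hK, fun M _ _ _ ⟨h⟩ hM R hR hV => ?_⟩
  have : CompactSpace M := h.symm.compactSpace
  obtain ⟨δ, hδ, c, hc, hcol⟩ := H M Set.univ R isClosed_univ hR (hV.trans ENNReal.ofReal_lt_top)
    (fun x => (measure_mono (subset_univ _)).trans_lt hV)
  have := systole_lt_of_colouring h hM (2 * R) δ R (by positivity) hδ hR c hc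
    (fun x => hcol x (mem_univ _))
  exact this.le.trans (ENNReal.ofReal_le_ofReal (by linarith))

lemma torus_final (n : ℕ) (hn : 0 < n) :
    ∃ C : ℝ, 0 < C ∧
      ∀ (M : Type) [MetricSpace M] [MeasurableSpace M] [BorelSpace M],
        Nonempty (M ≃ₜ Torus n) → IsLengthMetric M →
        systole M ≤ ENNReal.ofReal C * rvol n (Set.univ : Set M) ^ ((n : ℝ)⁻¹) := by
  obtain ⟨K, hK, H⟩ := systole_le_aux n hn
  set a : ℝ := (Real.pi ^ ((n : ℝ) / 2) / Real.Gamma ((n : ℝ) / 2 + 1)) / 2 ^ n with ha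
  have ha0 : 0 < a := by
    have h1 : 0 < Real.Gamma ((n : ℝ) / 2 + 1) := Real.Gamma_pos_of_pos (by positivity)
    have := Real.pi_pos
    positivity
  have haE : unitBallVolume n / 2 ^ n = ENNReal.ofReal a := by
    rw [unitBallVolume, ha, ENNReal.ofReal_div_of_pos (y := 2 ^ n) (by positivity), ENNReal.ofReal_pow (by norm_num)]
    simp
  have hn' : (0 : ℝ) < n := by exact_mod_cast hn
  have hn0 : (0 : ℝ) < (n : ℝ)⁻¹ := inv_pos.2 hn'
  refine ⟨7 * (K / a) ^ ((n : ℝ)⁻¹), by positivity, fun M _ _ _ hne hM => ?_⟩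
  rw [rvol, haE]
  set V := μH[(n : ℝ)] (Set.univ : Set M) with hV
  by_cases hVt : V = ∞
  · rw [hVt, ENNReal.mul_top (by simpa using ha0), ENNReal.top_rpow_of_pos hn0, ENNReal.mul_top]
    · exact le_top
    · simp only [ne_eq, ENNReal.ofReal_eq_zero, not_le]; positivity
  obtain ⟨v, hv0, hv⟩ : ∃ v : ℝ, 0 ≤ v ∧ V = ENNReal.ofReal v :=
    ⟨V.toReal, ENNReal.toReal_nonneg, (ENNReal.ofReal_toReal hVt).symm⟩
  rw [hv, ← ENNReal.ofReal_mul ha0.le, ENNReal.ofReal_rpow_of_nonneg (by positivity) hn0.le,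
    ← ENNReal.ofReal_mul (by positivity)]
  have key : 7 * (K / a) ^ ((n : ℝ)⁻¹) * (a * v) ^ ((n : ℝ)⁻¹) = 7 * (K * v) ^ ((n : ℝ)⁻¹) := by
    rw [mul_assoc, ← Real.mul_rpow (by positivity) (by positivity)]
    congr 2
    field_simp
  rw [key]
  set r := (K * v) ^ ((n : ℝ)⁻¹) with hr
  have hr0 : 0 ≤ r := by positivity
  have hrn : r ^ n = K * v := by
    rw [hr, ← Real.rpow_natCast, ← Real.rpow_mul (by positivity), inv_mul_cancel₀ hn'.ne',
      Real.rpow_one]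
  refine ENNReal.le_of_forall_pos_le_add fun ε hε _ => ?_
  have hR := H M hne hM (r + ε / 7) (by positivity) (by
    rw [← hV, hv]
    refine (ENNReal.ofReal_lt_ofReal_iff (by positivity)).2 ?_
    rw [lt_div_iff₀ hK, mul_comm, ← hrn]
    exact pow_lt_pow_left₀ (by have : (0:ℝ) < ε := hε
                               linarith) hr0 hn.ne')
  refine hR.trans ?_
  rw [mul_add, ENNReal.ofReal_add (by positivity) (by positivity)]
  gcongr
  rw [mul_div_cancel₀ _ (by norm_num : (7:ℝ) ≠ 0)]
  simp

/-- **Theorem 1 (Gromov; systolic inequality for the torus).**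
For every `n` there is a constant `C(n)` such that every Riemannian metric `g` on the
`n`-dimensional torus satisfies `Sys(Tⁿ, g) ≤ C(n) · Vol(Tⁿ, g)^(1/n)`.

The Riemannian manifold `(Tⁿ, g)` is encoded as a length metric space `M` homeomorphic to
the `n`-torus; the systole is the infimum of lengths of non-contractible loops, and the
volume is the (normalized) `n`-dimensional Hausdorff measure. -/
theorem torus_systolic_inequality (n : ℕ) (hn : 0 < n) :
    ∃ C : ℝ, 0 < C ∧
      ∀ (M : Type) [MetricSpace M] [MeasurableSpace M] [BorelSpace M],
        Nonempty (M ≃ₜ Torus n) → IsLengthMetric M →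
        systole M ≤ ENNReal.ofReal C * rvol n (Set.univ : Set M) ^ ((n : ℝ)⁻¹) := by
  exact torus_final n hn

end
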